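/- (Stationary state of model B with periodic boundary conditions as a 2-dimensional matrix-product state.) Let λ, e, d be real numbers with λ ≠ 1 and e·d = λ/(1−λ). Let M_0 = E = [[e,1],[0,0]] and M_1 = D = [[d,0],[1,0]] (2×2 real matrices). Let h be the local transition matrix of range 3 on 2 states of model B and H^(p)_L the corresponding periodic stochastic Hamiltonian. Then for every L ≥ 3, the function P on configurations defined by P(σ) = Trace(M_{σ(0)} M_{σ(1)} ⋯ M_{σ(L−1)}) satisfies H^(p)_L P = 0; i.e. this matrix-product state is a stationary state of model B on the ring of L sites. -/

import Mathlib

open Finset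

noncomputable section

/-- The configuration `σ` with the values at sites `k, k+1, …, k+r-1` (taken mod `L`)
replaced by the tuple `τ`. -/
def updateConfig (L m r : ℕ) (σ : Fin L → Fin m) (k : ℕ) (τ : Fin r → Fin m) :
    Fin L → Fin m :=
  fun i => if h : ∃ j : Fin r, (i : ℕ) = (k + (j : ℕ)) % L then τ h.choose else σ i

/-- The periodic stochastic Hamiltonian with bulk interaction of range `r`, acting on
real-valued functions of configurations of a ring of `L` sites with `m` states per site. -/
def Hper (L m r : ℕ) (h : (Fin r → Fin m) → (Fin r → Fin m) → ℝ)
    (f : (Fin L → Fin m) → ℝ) : (Fin L → Fin m) → ℝ :=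
  fun σ => ∑ k : Fin L, ∑ τ : Fin r → Fin m,
    h (fun j => σ ⟨((k : ℕ) + (j : ℕ)) % L, Nat.mod_lt _ k.pos⟩) τ *
      f (updateConfig L m r σ (k : ℕ) τ)

/-- The open-chain stochastic Hamiltonian with bulk interaction `hb` of range `r` and
boundary interactions `hl`, `hr` of range `r-1`, acting on real-valued functions of
configurations of a chain of `L` sites with `m` states per site. -/
def Hopen (L m r : ℕ) (hL : 0 < L)
    (hb : (Fin r → Fin m) → (Fin r → Fin m) → ℝ)
    (hl hr : (Fin (r - 1) → Fin m) → (Fin (r - 1) → Fin m) → ℝ)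
    (f : (Fin L → Fin m) → ℝ) : (Fin L → Fin m) → ℝ :=
  fun σ =>
    (∑ τ : Fin (r - 1) → Fin m,
      hl (fun j => σ ⟨(j : ℕ) % L, Nat.mod_lt _ hL⟩) τ *
        f (updateConfig L m (r - 1) σ 0 τ))
    + (∑ k ∈ Finset.range (L - r + 1), ∑ τ : Fin r → Fin m,
      hb (fun j => σ ⟨(k + (j : ℕ)) % L, Nat.mod_lt _ hL⟩) τ *
        f (updateConfig L m r σ k τ))
    + (∑ τ : Fin (r - 1) → Fin m,
      hr (fun j => σ ⟨((L - (r - 1)) + (j : ℕ)) % L, Nat.mod_lt _ hL⟩) τ *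
        f (updateConfig L m (r - 1) σ (L - (r - 1)) τ))

/-- The local transition matrix associated to a family of transition rates `w`:
`h[τ',τ] = -w(τ→τ')` off the diagonal and `h[τ,τ] = ∑_{τ'≠τ} w(τ→τ')`. -/
def rateToH {m k : ℕ} (w : (Fin k → Fin m) → (Fin k → Fin m) → ℝ) :
    (Fin k → Fin m) → (Fin k → Fin m) → ℝ :=
  fun a b => if a = b then ∑ c ∈ Finset.univ.filter (fun c => c ≠ a), w a c else -(w b a)

/-- The bulk transition rates of **model B**: `(1,0,0)→(0,1,0)` at rate `1` and
`(1,0,1)→(0,1,1)` at rate `lam` (state `1` = particle, state `0` = empty). -/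
def rateB (lam : ℝ) : (Fin 3 → Fin 2) → (Fin 3 → Fin 2) → ℝ :=
  fun τ τ' =>
    if τ = ![1, 0, 0] ∧ τ' = ![0, 1, 0] then 1
    else if τ = ![1, 0, 1] ∧ τ' = ![0, 1, 1] then lam
    else 0

/-- The local transition matrix of range 3 of model B. -/
def hB (lam : ℝ) : (Fin 3 → Fin 2) → (Fin 3 → Fin 2) → ℝ := rateToH (rateB lam)

/-!
Each local term of the Hamiltonian, applied to the matrix-product state, is a discrete divergence:
with an auxiliary matrix `X`, the sum `∑ τ, h[a, τ] M_{τ 0} M_{τ 1} M_{τ 2}` equals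
`F(a₀, a₁) M_{a₂} - M_{a₀} F(a₁, a₂)`, where `F(1, b) = D M_b`, `F(0, 1) = X` and `F(0, 0) = 0`.
Inserted into the cyclic trace, this is the difference of the trace with `F` inserted at site `k`
and the one with `F` inserted at site `k + 1`, so the sum over the ring telescopes to zero. For
model B the divergence condition amounts to four relations among `D`, `E` and `X`, which hold for
the given `2 × 2` matrices with `X = [[1, 0], [-e, 0]]`.
-/

section Words

variable {α R : Type*}

/-- The subword of length `n` starting at position `k` of an infinite word `t`. -/
def window (t : ℕ → α) (k n : ℕ) : Fin n → α := fun j => t (k + j)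

/-- The ordered product of the letters of a word, each letter `a` being represented by `M a`. -/
def wordProd [Monoid R] (M : α → R) {n : ℕ} (a : Fin n → α) : R :=
  (List.ofFn fun j => M (a j)).prod

/-- The infinite periodic word obtained by reading a word on the ring of `L` sites repeatedly.
Positions are natural numbers, so that windows may wrap around the ring. -/
def periodicExt {L : ℕ} [NeZero L] (σ : Fin L → α) (i : ℕ) : α := σ (Fin.ofNat L i)

lemma periodicExt_periodic {L : ℕ} [NeZero L] (σ : Fin L → α) :
    Function.Periodic (periodicExt σ) L := fun i =>
  congrArg σ (Fin.ext (Nat.add_mod_right i L))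

lemma window_periodicExt_zero {L : ℕ} [NeZero L] (σ : Fin L → α) :
    window (periodicExt σ) 0 L = σ := by
  funext j
  simp [window, periodicExt]

lemma window_add_period {t : ℕ → α} {L : ℕ} (ht : Function.Periodic t L) (k n : ℕ) :
    window t (k + L) n = window t k n := by
  funext j
  rw [window, add_right_comm, ht]
  rfl

lemma init_window (t : ℕ → α) (k n : ℕ) : Fin.init (window t k (n + 1)) = window t k n := rfl

lemma tail_window (t : ℕ → α) (k n : ℕ) :
    Fin.tail (window t k (n + 1)) = window t (k + 1) n := by
  funext j
  simp [Fin.tail, window, add_assoc, add_comm 1]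

variable [Monoid R] (M : α → R)

lemma wordProd_window_add (t : ℕ → α) (k m n : ℕ) :
    wordProd M (window t k (m + n)) =
      wordProd M (window t k m) * wordProd M (window t (k + m) n) := by
  simp [wordProd, window, List.ofFn_add, add_assoc]

lemma wordProd_window_one (t : ℕ → α) (k : ℕ) : wordProd M (window t k 1) = M (t k) := by
  simp [wordProd, window]

lemma wordProd_window_succ (t : ℕ → α) (k n : ℕ) :
    wordProd M (window t k (n + 1)) = wordProd M (window t k n) * M (t (k + n)) := by
  rw [wordProd_window_add, wordProd_window_one]

lemma wordProd_window_succ' (t : ℕ → α) (k n : ℕ) :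
    wordProd M (window t k (n + 1)) = M (t k) * wordProd M (window t (k + 1) n) := by
  rw [add_comm n, wordProd_window_add, wordProd_window_one]

end Words

section CyclicTrace

variable {α ι R : Type*} [Fintype ι] [DecidableEq ι] [CommSemiring R] (M : α → Matrix ι ι R)

lemma trace_wordProd_window_of_periodic {t : ℕ → α} {L : ℕ} (ht : Function.Periodic t L) (k : ℕ) :
    (wordProd M (window t k L)).trace = (wordProd M (window t 0 L)).trace := by
  induction k with
  | zero => rfl
  | succ k ih =>
    cases L with
    | zero => rfl
    | succ n =>
      rw [← ih, wordProd_window_succ, wordProd_window_succ', Matrix.trace_mul_comm,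
        add_assoc, add_comm 1 n, ht]

lemma trace_wordProd_eq_window {L : ℕ} [NeZero L] (σ : Fin L → α) (k : ℕ) :
    (wordProd M σ).trace = (wordProd M (window (periodicExt σ) k L)).trace := by
  rw [trace_wordProd_window_of_periodic M (periodicExt_periodic σ), window_periodicExt_zero]

end CyclicTrace

section UpdateConfig

variable {L m r : ℕ} [NeZero L]

lemma window_periodicExt_updateConfig (hr : r ≤ L) (σ : Fin L → Fin m) (k : ℕ)
    (τ : Fin r → Fin m) : window (periodicExt (updateConfig L m r σ k τ)) k r = τ := by
  funext j
  have hj : ∃ i : Fin r, (k + (j : ℕ)) % L = (k + (i : ℕ)) % L := ⟨j, rfl⟩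
  have hchoose : (j : ℕ) ≡ hj.choose [MOD L] := Nat.ModEq.add_left_cancel' k hj.choose_spec
  have hval := hchoose.eq_of_lt_of_lt (j.2.trans_le hr) (hj.choose.2.trans_le hr)
  exact (dif_pos hj).trans (congrArg τ (Fin.ext hval.symm))

lemma window_periodicExt_updateConfig_of_disjoint {n : ℕ} (hn : r + n ≤ L) (σ : Fin L → Fin m)
    (k : ℕ) (τ : Fin r → Fin m) :
    window (periodicExt (updateConfig L m r σ k τ)) (k + r) n =
      window (periodicExt σ) (k + r) n := by
  funext j
  refine dif_neg ?_
  rintro ⟨i, hi⟩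
  have hmod : r + (j : ℕ) ≡ i [MOD L] :=
    Nat.ModEq.add_left_cancel' k (by rw [← add_assoc]; exact hi)
  have := hmod.eq_of_lt_of_lt (by omega) (by omega)
  omega

lemma trace_wordProd_updateConfig {ι : Type*} [Fintype ι] [DecidableEq ι]
    {R : Type*} [CommSemiring R] (M : Fin m → Matrix ι ι R) {n : ℕ} (hL : L = r + n)
    (σ : Fin L → Fin m) (k : ℕ) (τ : Fin r → Fin m) :
    (wordProd M (updateConfig L m r σ k τ)).trace =
      (wordProd M τ * wordProd M (window (periodicExt σ) (k + r) n)).trace := by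
  subst hL
  rw [trace_wordProd_eq_window M _ k, wordProd_window_add,
    window_periodicExt_updateConfig (Nat.le_add_right r n),
    window_periodicExt_updateConfig_of_disjoint le_rfl]

end UpdateConfig

section LocalDivergence

/-- The local matrix `h` of range `s + 1` acts on the products of `s + 1` letters as the discrete
divergence of a flux `F`, which is attached to words of length `s`. -/
def IsLocalDivergence {m s : ℕ} {R : Type*} [Ring R] [Module ℝ R]
    (h : (Fin (s + 1) → Fin m) → (Fin (s + 1) → Fin m) → ℝ) (M : Fin m → R)
    (F : (Fin s → Fin m) → R) : Prop :=
  ∀ a, ∑ τ, h a τ • wordProd M τ = F (Fin.init a) * M (a (Fin.last s)) - M (a 0) * F (Fin.tail a)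

variable {m s : ℕ} {ι : Type*} [Fintype ι] [DecidableEq ι]
  {h : (Fin (s + 1) → Fin m) → (Fin (s + 1) → Fin m) → ℝ}
  {M : Fin m → Matrix ι ι ℝ} {F : (Fin s → Fin m) → Matrix ι ι ℝ}

/-- The trace around a ring of `s + n` sites spelling the word `t`, in which the `s` matrices from
site `k` on are replaced by the flux `F`. -/
def traceFlux (M : Fin m → Matrix ι ι ℝ) (F : (Fin s → Fin m) → Matrix ι ι ℝ) (t : ℕ → Fin m)
    (n k : ℕ) : ℝ :=
  (F (window t k s) * wordProd M (window t (k + s) n)).trace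

lemma IsLocalDivergence.sum_trace_eq_traceFlux_sub (hF : IsLocalDivergence h M F) {t : ℕ → Fin m}
    {n : ℕ} (ht : Function.Periodic t (s + 1 + n)) (k : ℕ) :
    ∑ τ, h (window t k (s + 1)) τ *
        (wordProd M τ * wordProd M (window t (k + (s + 1)) n)).trace =
      traceFlux M F t (n + 1) k - traceFlux M F t (n + 1) (k + 1) := by
  set rest := wordProd M (window t (k + (s + 1)) n) with hrest
  have hfirst : M (t (k + s)) * rest = wordProd M (window t (k + s) (n + 1)) := by
    rw [wordProd_window_succ', hrest, add_assoc k s 1]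
  have hsecond : rest * M (t k) = wordProd M (window t (k + 1 + s) (n + 1)) := by
    rw [wordProd_window_succ, hrest, ← ht k, add_right_comm k 1 s]
    simp only [add_assoc]
  calc ∑ τ, h (window t k (s + 1)) τ * (wordProd M τ * rest).trace
      = ((∑ τ, h (window t k (s + 1)) τ • wordProd M τ) * rest).trace := by
        simp only [sum_mul, smul_mul_assoc, Matrix.trace_sum, Matrix.trace_smul, smul_eq_mul]
    _ = (F (window t k s) * (M (t (k + s)) * rest)).trace -
          (M (t k) * (F (window t (k + 1) s) * rest)).trace := by
        rw [hF, init_window, tail_window, sub_mul, Matrix.trace_sub, mul_assoc, mul_assoc]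
        rfl
    _ = traceFlux M F t (n + 1) k - traceFlux M F t (n + 1) (k + 1) := by
        rw [Matrix.trace_mul_comm (M (t k)), mul_assoc, hfirst, hsecond, traceFlux, traceFlux]

theorem IsLocalDivergence.Hper_trace_wordProd_eq_zero (hF : IsLocalDivergence h M F) {L : ℕ}
    (hL : s + 1 ≤ L) : Hper L m (s + 1) h (fun σ => (wordProd M σ).trace) = 0 := by
  obtain ⟨n, rfl⟩ := Nat.exists_eq_add_of_le hL
  have : NeZero (s + 1 + n) := ⟨by omega⟩
  funext σ
  set t := periodicExt σ
  have ht : Function.Periodic t (s + 1 + n) := periodicExt_periodic σ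
  calc Hper (s + 1 + n) m (s + 1) h (fun σ => (wordProd M σ).trace) σ
      = ∑ k : Fin (s + 1 + n), (traceFlux M F t (n + 1) k - traceFlux M F t (n + 1) (k + 1)) := by
        refine sum_congr rfl fun k _ => ?_
        simp only [trace_wordProd_updateConfig M rfl]
        exact hF.sum_trace_eq_traceFlux_sub ht k
    _ = traceFlux M F t (n + 1) 0 - traceFlux M F t (n + 1) (s + 1 + n) := by
        rw [Fin.sum_univ_eq_sum_range
          (fun k => traceFlux M F t (n + 1) k - traceFlux M F t (n + 1) (k + 1)),
          sum_range_sub']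
    _ = 0 := by
        rw [← zero_add (s + 1 + n), traceFlux, traceFlux, add_right_comm 0 _ s,
          window_add_period ht, window_add_period ht, sub_self]

end LocalDivergence

section ModelB

lemma sum_rateToH_smul {m k : ℕ} {V : Type*} [AddCommGroup V] [Module ℝ V]
    (w : (Fin k → Fin m) → (Fin k → Fin m) → ℝ) (f : (Fin k → Fin m) → V) (a : Fin k → Fin m) :
    ∑ τ, rateToH w a τ • f τ = (∑ τ, w a τ) • f a - ∑ τ, w τ a • f τ := by
  have hdiag : rateToH w a a = ∑ τ ∈ univ.erase a, w a τ := by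
    rw [rateToH, if_pos rfl, filter_ne']
  have hoff : ∀ τ ∈ univ.erase a, rateToH w a τ • f τ = -(w τ a • f τ) := fun τ hτ => by
    rw [rateToH, if_neg (ne_of_mem_erase hτ).symm, neg_smul]
  rw [← add_sum_erase univ (fun τ => rateToH w a τ • f τ) (mem_univ a),
    ← add_sum_erase univ (w a) (mem_univ a),
    ← add_sum_erase univ (fun τ => w τ a • f τ) (mem_univ a),
    hdiag, sum_congr rfl hoff, sum_neg_distrib, add_smul]
  abel

lemma rateB_eq_add (lam : ℝ) (τ τ' : Fin 3 → Fin 2) :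
    rateB lam τ τ' = (if τ = ![1, 0, 0] then if τ' = ![0, 1, 0] then 1 else 0 else 0) +
      (if τ = ![1, 0, 1] then if τ' = ![0, 1, 1] then lam else 0 else 0) := by
  by_cases hτ : τ = ![1, 0, 0]
  · simp [rateB, hτ]
  · simp [rateB, hτ, ite_and]

lemma sum_hB_smul {V : Type*} [AddCommGroup V] [Module ℝ V] (lam : ℝ)
    (f : (Fin 3 → Fin 2) → V) (a : Fin 3 → Fin 2) :
    ∑ τ, hB lam a τ • f τ =
      ((if a = ![1, 0, 0] then 1 else 0) + (if a = ![1, 0, 1] then lam else 0)) • f a -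
      ((if a = ![0, 1, 0] then f ![1, 0, 0] else 0) +
        (if a = ![0, 1, 1] then lam • f ![1, 0, 1] else 0)) := by
  rw [hB, sum_rateToH_smul]
  simp only [rateB_eq_add, add_smul, ite_smul, zero_smul, one_smul, sum_add_distrib,
    sum_ite_eq', mem_univ, if_true, sum_ite_irrel, sum_const_zero]

/-- The relations of the matrix algebra of model B, where `M 0` represents an empty site, `M 1` a
particle, and the auxiliary element `X` the flux through a hole followed by a particle. -/
structure ModelBAlgebra {R : Type*} [Ring R] [Module ℝ R] (lam : ℝ) (M : Fin 2 → R) (X : R) :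
    Prop where
  hole_aux : M 0 * X = 0
  particle_aux : M 1 * X = (1 - lam) • (M 1 * M 0 * M 1)
  aux_hole : X * M 0 = M 0 * M 1 * M 0 - M 1 * M 0 * M 0
  aux_particle : X * M 1 = M 0 * M 1 * M 1 - lam • (M 1 * M 0 * M 1)

/-- The flux of model B: a pair starting with a particle contributes its own matrix product, the
pair `01` contributes `X`, and `00` contributes nothing. -/
def modelBFlux {R : Type*} [Ring R] (M : Fin 2 → R) (X : R) (a : Fin 2 → Fin 2) : R :=
  if a 0 = 1 then M 1 * M (a 1) else if a 1 = 1 then X else 0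

theorem ModelBAlgebra.isLocalDivergence {R : Type*} [Ring R] [Module ℝ R] {lam : ℝ}
    {M : Fin 2 → R} {X : R} (hX : ModelBAlgebra lam M X) :
    IsLocalDivergence (hB lam) M (modelBFlux M X) := by
  intro a
  obtain ⟨x, y, z, rfl⟩ : ∃ x y z, a = ![x, y, z] :=
    ⟨a 0, a 1, a 2, by funext j; fin_cases j <;> rfl⟩
  rw [sum_hB_smul]
  -- The words `001`, `101`, `010`, `011` give the four relations; the other four are immediate.
  fin_cases x <;> fin_cases y <;> fin_cases z <;>
    simp [modelBFlux, wordProd, Fin.init, Fin.tail, Fin.last, mul_assoc, sub_smul,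
      hX.hole_aux, hX.particle_aux, hX.aux_hole, hX.aux_particle]

lemma modelBAlgebra_fin_two {lam e d : ℝ} (hed : lam * (1 + e * d) = e * d)
    {M : Fin 2 → Matrix (Fin 2) (Fin 2) ℝ}
    (hM0 : M 0 = !![e, 1; 0, 0]) (hM1 : M 1 = !![d, 0; 1, 0]) :
    ModelBAlgebra lam M !![1, 0; -e, 0] := by
  have hprod : M 1 * M 0 * M 1 = (1 + e * d) • M 1 := by
    ext i j
    fin_cases i <;> fin_cases j <;> simp [hM0, hM1] <;> ring
  have hscalar : (1 - lam) * (1 + e * d) = 1 := by linear_combination -hed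
  constructor
  case hole_aux =>
    ext i j
    fin_cases i <;> fin_cases j <;> simp [hM0]
  case particle_aux =>
    rw [hprod, smul_smul, hscalar, one_smul]
    ext i j
    fin_cases i <;> fin_cases j <;> simp [hM1]
  case aux_hole =>
    ext i j
    fin_cases i <;> fin_cases j <;> simp [hM0, hM1] <;> ring
  case aux_particle =>
    rw [hprod, smul_smul, hed]
    ext i j
    fin_cases i <;> fin_cases j <;> simp [hM0, hM1]
    ring

end ModelB

/-- **Stationary state of model B with periodic boundary conditions as a 2-dimensional
matrix-product state**: with `M 0 = E = [[e,1],[0,0]]`, `M 1 = D = [[d,0],[1,0]]` and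
`e·d = λ/(1-λ)`, the state `P(σ) = Trace (M_{σ 0} ⋯ M_{σ (L-1)})` is a zero-energy
eigenvector of the periodic stochastic Hamiltonian of model B for every `L ≥ 3`. -/
theorem modelB_periodic_MPS (lam e d : ℝ) (hlam : lam ≠ 1)
    (hed : e * d = lam / (1 - lam))
    (M : Fin 2 → Matrix (Fin 2) (Fin 2) ℝ)
    (hM0 : M 0 = !![e, 1; 0, 0]) (hM1 : M 1 = !![d, 0; 1, 0])
    (L : ℕ) (hL : 3 ≤ L) :
    Hper L 2 3 (hB lam)
      (fun σ => ((List.ofFn fun j : Fin L => M (σ j)).prod).trace) = 0 := by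
  have hne : 1 - lam ≠ 0 := sub_ne_zero.mpr hlam.symm
  have hed' : lam * (1 + e * d) = e * d := by
    rw [hed]
    field_simp
    ring
  exact (modelBAlgebra_fin_two hed' hM0 hM1).isLocalDivergence.Hper_trace_wordProd_eq_zero hL
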